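/- A matrix A ∈ M₆(ℝ) satisfies Aᵀ η A = η, det A = 1, A ε₅ = ε₅ and A(ε₁+ε₄) = ε₁+ε₄ if and only if there exist R ∈ SO(3) and v ∈ ℝ³ such that A = A(R̂; v̂), where R̂ = blockdiag(1, R) ∈ M₄(ℝ) and v̂ = (0, v¹, v², v³) ∈ ℝ⁴. In other words, the image of the embedding of the Euclidean group SO(3) ⋉ ℝ³ into the Laguerre group L coincides with the subgroup of L consisting of all elements fixing the vector ε₁+ε₄. -/

import Mathlib

open Matrix

/-- The Lorentz scalar product on `ℝ⁴`: `(V,W) = −V⁰W⁰ + V¹W¹ + V²W² + V³W³`. -/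
def mprod (V W : Fin 4 → ℝ) : ℝ :=
  -(V 0 * W 0) + V 1 * W 1 + V 2 * W 2 + V 3 * W 3

/-- The Gram matrix `η` of the signature-(4,2) scalar product
`⟨𝔞,𝔟⟩ = −(𝔞⁰𝔟⁵ + 𝔞⁵𝔟⁰) − (𝔞¹𝔟⁴ + 𝔞⁴𝔟¹) + 𝔞²𝔟² + 𝔞³𝔟³` on `ℝ⁶`. -/
def etaM : Matrix (Fin 6) (Fin 6) ℝ :=
  !![0, 0, 0, 0, 0, -1;
     0, 0, 0, 0, -1, 0;
     0, 0, 1, 0, 0, 0;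
     0, 0, 0, 1, 0, 0;
     0, -1, 0, 0, 0, 0;
     -1, 0, 0, 0, 0, 0]

/-- The Gram matrix `ηₗ = diag(−1,1,1,1)` of the Lorentz product on `ℝ⁴`. -/
def etaL : Matrix (Fin 4) (Fin 4) ℝ :=
  !![-1, 0, 0, 0;
     0, 1, 0, 0;
     0, 0, 1, 0;
     0, 0, 0, 1]

/-- The matrix `K`. -/
noncomputable def Kmat : Matrix (Fin 4) (Fin 4) ℝ :=
  !![1 / Real.sqrt 2, 1 / Real.sqrt 2, 0, 0;
     0, 0, 1, 0;
     0, 0, 0, 1;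
     1 / Real.sqrt 2, -(1 / Real.sqrt 2), 0, 0]

/-- The matrix `K⁻¹`. -/
noncomputable def KmatInv : Matrix (Fin 4) (Fin 4) ℝ :=
  !![1 / Real.sqrt 2, 0, 0, 1 / Real.sqrt 2;
     1 / Real.sqrt 2, 0, 0, -(1 / Real.sqrt 2);
     0, 1, 0, 0;
     0, 0, 1, 0]

/-- The row vector `*Ṽ = (−Ṽ³, Ṽ¹, Ṽ², −Ṽ⁰)`, acting on `W` by
`*Ṽ(W) = −(Ṽ⁰W³ + Ṽ³W⁰) + Ṽ¹W¹ + Ṽ²W²`. -/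
def starV (Vt : Fin 4 → ℝ) : Fin 4 → ℝ := ![-(Vt 3), Vt 1, Vt 2, -(Vt 0)]

/-- The element `A(B;V) ∈ M₆(ℝ)` of the Laguerre group: the block matrix with block
rows `(1, 0, 0)`, `(Ṽ, B̃, 0)`, `((V,V)/2, *Ṽ·B̃, 1)`, where `Ṽ = KV`, `B̃ = KBK⁻¹`. -/
noncomputable def AofBV (B : Matrix (Fin 4) (Fin 4) ℝ) (V : Fin 4 → ℝ) :
    Matrix (Fin 6) (Fin 6) ℝ := fun i j =>
  let Vt : Fin 4 → ℝ := Kmat.mulVec V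
  let Bt : Matrix (Fin 4) (Fin 4) ℝ := Kmat * B * KmatInv
  if hi0 : i.val = 0 then (if j.val = 0 then 1 else 0)
  else if hi : i.val ≤ 4 then
    if hj0 : j.val = 0 then Vt ⟨i.val - 1, by omega⟩
    else if hj : j.val ≤ 4 then Bt ⟨i.val - 1, by omega⟩ ⟨j.val - 1, by omega⟩
    else 0
  else
    if hj0 : j.val = 0 then mprod V V / 2
    else if hj : j.val ≤ 4 then Matrix.vecMul (starV Vt) Bt ⟨j.val - 1, by omega⟩
    else 1

/-- The basis vector `ε₅` of `ℝ⁶`. -/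
def eps5 : Fin 6 → ℝ := ![0, 0, 0, 0, 0, 1]

/-- The vector `ε₁ + ε₄` of `ℝ⁶`. -/
def eps14 : Fin 6 → ℝ := ![0, 1, 0, 0, 1, 0]

/-- `R̂ = blockdiag(1, R) ∈ M₄(ℝ)` for `R ∈ M₃(ℝ)`. -/
def hatM (R : Matrix (Fin 3) (Fin 3) ℝ) : Matrix (Fin 4) (Fin 4) ℝ := fun i j =>
  if hi : i.val = 0 then (if j.val = 0 then 1 else 0)
  else if hj : j.val = 0 then 0
  else R ⟨i.val - 1, by have := i.isLt; omega⟩ ⟨j.val - 1, by have := j.isLt; omega⟩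

/-- `v̂ = (0, v¹, v², v³) ∈ ℝ⁴` for `v ∈ ℝ³`. -/
def hatV (v : Fin 3 → ℝ) : Fin 4 → ℝ := ![0, v 0, v 1, v 2]

/-!
An isometry `M` of the orthogonal sum of `g` with a hyperbolic plane which fixes the null vector
`ε_∞` of that plane is determined by its middle columns: pairing with `M ε_∞ = ε_∞` gives the
first row of `M`, pairing with the first column gives the last row, and what remains is an
isometry `B` of `g` and a translation vector `V`. For the Lorentz form this says that the Laguerre
group consists of the matrices `A(B; V)`. Up to the factor `√2`, the vector `ε₁ + ε₄` is the
timelike unit vector `e₀` written in the null coordinates, so `A(B; V)` fixes it if and only if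
`B e₀ = e₀` and `(V, e₀) = 0`. The first condition makes `B` preserve the orthogonal complement of
`e₀`, so `B = R̂` with `R` orthogonal, and the second one says `V⁰ = 0`.
-/

section ChangeOfBasis

theorem submatrix_equiv_inj_iff {α m n : Type*} (e : n ≃ m) {M N : Matrix m m α} :
    M.submatrix e e = N.submatrix e e ↔ M = N :=
  (reindex e.symm e.symm).injective.eq_iff

variable {α m n : Type*} [CommSemiring α] [Fintype m] [Fintype n]

theorem submatrix_isometry_iff (e : n ≃ m) (g M : Matrix m m α) :
    (M.submatrix e e)ᵀ * g.submatrix e e * M.submatrix e e = g.submatrix e e ↔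
      Mᵀ * g * M = g := by
  simp only [transpose_submatrix, submatrix_mul_equiv, submatrix_equiv_inj_iff]

theorem submatrix_mulVec_eq_self_iff (e : n ≃ m) (M : Matrix m m α) (w : m → α) :
    M.submatrix e e *ᵥ (w ∘ e) = w ∘ e ↔ M *ᵥ w = w := by
  rw [submatrix_mulVec_equiv, Function.comp_assoc, e.self_comp_symm, Function.comp_id]
  exact e.surjective.injective_comp_right.eq_iff

variable [DecidableEq n]

theorem conj_isometry_iff {P Q g g' : Matrix n n α} (hQP : Q * P = 1) (hg : Pᵀ * g' * P = g)
    (M : Matrix n n α) :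
    (P * M * Q)ᵀ * g' * (P * M * Q) = g' ↔ Mᵀ * g * M = g := by
  have hP : IsUnit P := .of_mul_eq_one_right Q hQP
  have hPt : IsUnit Pᵀ := (isUnit_transpose P).2 hP
  have hPQt : Pᵀ * Qᵀ = 1 := by rw [← transpose_mul, hQP, transpose_one]
  have conj : Pᵀ * ((P * M * Q)ᵀ * g' * (P * M * Q)) * P = Mᵀ * (Pᵀ * g' * P) * M :=
    calc
      _ = (Pᵀ * Qᵀ) * Mᵀ * (Pᵀ * g' * P) * M * (Q * P) := by
        simp only [transpose_mul, Matrix.mul_assoc]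
      _ = _ := by rw [hPQt, hQP, Matrix.one_mul, Matrix.mul_one]
  rw [← hg, ← conj, hP.mul_left_inj, hPt.mul_right_inj]

theorem conj_mulVec_eq_self_iff {P Q : Matrix n n α} (hQP : Q * P = 1) (M : Matrix n n α)
    (w : n → α) : (P * M * Q) *ᵥ (P *ᵥ w) = P *ᵥ w ↔ M *ᵥ w = w := by
  rw [mulVec_mulVec, Matrix.mul_assoc, hQP, Matrix.mul_one, ← mulVec_mulVec]
  exact (mulVec_injective_of_isUnit (.of_mul_eq_one_right Q hQP)).eq_iff

end ChangeOfBasis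

section BlockDiagonalForm

variable {α p n : Type*} [CommRing α] [Fintype p] [DecidableEq p] [Fintype n]

theorem fromBlocks_one_zero_isometry_iff {a : Matrix p p α} (ha : IsUnit a) (h R : Matrix n n α)
    (X : Matrix p n α) :
    (fromBlocks 1 X 0 R)ᵀ * fromBlocks a 0 0 h * fromBlocks 1 X 0 R = fromBlocks a 0 0 h ↔
      X = 0 ∧ Rᵀ * h * R = h := by
  have haX : a * X = 0 ↔ X = 0 := by
    have := ha.invertible
    exact ⟨fun hX => by simpa using congrArg (⅟a * ·) hX, fun hX => by rw [hX, Matrix.mul_zero]⟩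
  simp only [fromBlocks_transpose, fromBlocks_multiply, fromBlocks_inj]
  constructor
  · rintro ⟨-, hX, -, hR⟩
    obtain rfl : X = 0 := haX.1 (by simpa using hX)
    exact ⟨rfl, by simpa using hR⟩
  · rintro ⟨rfl, hR⟩
    simp [hR]

theorem isometry_fixing_left_iff [DecidableEq n] {a : Matrix p p α} (ha : IsUnit a)
    (h : Matrix n n α) (B : Matrix (p ⊕ n) (p ⊕ n) α) :
    (Bᵀ * fromBlocks a 0 0 h * B = fromBlocks a 0 0 h ∧
        ∀ i, B *ᵥ Pi.single (.inl i) 1 = Pi.single (.inl i) 1) ↔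
      ∃ R, Rᵀ * h * R = h ∧ B = fromBlocks 1 0 0 R := by
  constructor
  · rintro ⟨hB, hfix⟩
    have leftCol (i j) : B i (.inl j) = (Pi.single (.inl j) 1 : p ⊕ n → α) i := by
      simpa using congrFun (hfix j) i
    obtain ⟨X, R, rfl⟩ : ∃ X R, B = fromBlocks 1 X 0 R := by
      refine ⟨B.toBlocks₁₂, B.toBlocks₂₂, ?_⟩
      ext (i | i) (j | j) <;> simp [leftCol, toBlocks₁₂, toBlocks₂₂, Pi.single_apply, one_apply]
    obtain ⟨rfl, hR⟩ := (fromBlocks_one_zero_isometry_iff ha h R X).1 hB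
    exact ⟨R, hR, rfl⟩
  · rintro ⟨R, hR, rfl⟩
    refine ⟨(fromBlocks_one_zero_isometry_iff ha h R 0).2 ⟨rfl, hR⟩, fun i => ?_⟩
    ext (j | j) <;> simp [Pi.single_apply, one_apply]

end BlockDiagonalForm

section HyperbolicExtension

variable {α n : Type*} [CommRing α]

/-- The Gram matrix of the orthogonal sum of the form `g` with a hyperbolic plane. The first and
last basis vectors are null vectors spanning the plane; as in `etaM`, their product is `-1`. -/
def hyperbolicExtension (g : Matrix n n α) : Matrix (Unit ⊕ n ⊕ Unit) (Unit ⊕ n ⊕ Unit) α :=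
  fromBlocks 0 (fromCols 0 (-1)) (fromRows 0 (-1)) (fromBlocks g 0 0 0)

/-- The vector `w` regarded as a vector of the hyperbolic extension, orthogonal to the added
hyperbolic plane. -/
def middleVec (w : n → α) : Unit ⊕ n ⊕ Unit → α := Sum.elim 0 (Sum.elim w 0)

variable [Fintype n]

theorem transpose_mul_hyperbolicExtension_mul_apply (g : Matrix n n α)
    (M : Matrix (Unit ⊕ n ⊕ Unit) (Unit ⊕ n ⊕ Unit) α) (i j : Unit ⊕ n ⊕ Unit) :
    (Mᵀ * hyperbolicExtension g * M) i j =
      (fun k => M (.inr (.inl k)) i) ⬝ᵥ g *ᵥ (fun k => M (.inr (.inl k)) j)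
        - M (.inl ()) i * M (.inr (.inr ())) j - M (.inr (.inr ())) i * M (.inl ()) j := by
  rw [Matrix.mul_assoc]
  simp only [hyperbolicExtension, mul_apply, transpose_apply, Fintype.sum_sum_type,
    Finset.univ_unique, PUnit.default_eq_unit, Finset.sum_singleton, fromBlocks_apply₁₁,
    fromBlocks_apply₁₂, fromBlocks_apply₂₁, fromBlocks_apply₂₂, fromCols_apply_inl,
    fromCols_apply_inr, fromRows_apply_inl, fromRows_apply_inr, Matrix.zero_apply,
    Matrix.neg_apply, one_apply_eq, zero_mul, neg_mul, mul_neg, one_mul, zero_add, add_zero,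
    Finset.sum_const_zero, Finset.sum_neg_distrib, dotProduct, mulVec]
  ring

variable [Invertible (2 : α)]

/-- The element `A(B; V)` of the Laguerre group of an arbitrary form `g`: the lift to
`hyperbolicExtension g` of the affine map with linear part `B` and translation part `V`. -/
def laguerreMatrix (g B : Matrix n n α) (V : n → α) :
    Matrix (Unit ⊕ n ⊕ Unit) (Unit ⊕ n ⊕ Unit) α :=
  fromBlocks 1 0 (fromRows (replicateCol Unit V) (of fun _ _ => ⅟2 * (V ⬝ᵥ g *ᵥ V)))
    (fromBlocks B 0 (replicateRow Unit (V ᵥ* g ᵥ* B)) 1)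

theorem det_laguerreMatrix [DecidableEq n] (g B : Matrix n n α) (V : n → α) :
    (laguerreMatrix g B V).det = B.det := by
  simp [laguerreMatrix]

theorem laguerreMatrix_mulVec_single_last [DecidableEq n] (g B : Matrix n n α) (V : n → α) :
    laguerreMatrix g B V *ᵥ Pi.single (.inr (.inr ())) 1 = Pi.single (.inr (.inr ())) 1 := by
  ext (i | i | i) <;> simp [laguerreMatrix]

theorem laguerreMatrix_mulVec_middleVec (g B : Matrix n n α) (V w : n → α) :
    laguerreMatrix g B V *ᵥ middleVec w =
      Sum.elim (fun _ => 0) (Sum.elim (B *ᵥ w) fun _ => V ⬝ᵥ g *ᵥ (B *ᵥ w)) := by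
  rw [dotProduct_mulVec, dotProduct_mulVec]
  ext (i | i | i) <;> simp [laguerreMatrix, middleVec, mulVec, dotProduct]

theorem laguerreMatrix_mulVec_middleVec_eq_self_iff (g B : Matrix n n α) (V w : n → α) :
    laguerreMatrix g B V *ᵥ middleVec w = middleVec w ↔ B *ᵥ w = w ∧ V ⬝ᵥ g *ᵥ w = 0 := by
  rw [laguerreMatrix_mulVec_middleVec, middleVec, Sum.elim_eq_iff, Sum.elim_eq_iff]
  constructor
  · rintro ⟨-, hB, hV⟩
    exact ⟨hB, by simpa [hB] using congrFun hV ()⟩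
  · rintro ⟨hB, hV⟩
    exact ⟨rfl, hB, funext fun _ => by rw [hB, hV, Pi.zero_apply]⟩

theorem laguerreMatrix_isometry {g B : Matrix n n α} (hg : g.IsSymm) (hB : Bᵀ * g * B = g)
    (V : n → α) :
    (laguerreMatrix g B V)ᵀ * hyperbolicExtension g * laguerreMatrix g B V =
      hyperbolicExtension g := by
  have gram (i j : n) : (fun k => B k i) ⬝ᵥ g *ᵥ (fun k => B k j) = g i j :=
    (mul_mul_apply _ _ _ _ _).symm.trans (congrFun₂ hB i j)
  have lastRow (j : n) : V ⬝ᵥ g *ᵥ (fun k => B k j) = (V ᵥ* g ᵥ* B) j := dotProduct_mulVec _ _ _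
  have lastRow_symm (j : n) : (fun k => B k j) ⬝ᵥ g *ᵥ V = (V ᵥ* g ᵥ* B) j := by
    rw [dotProduct_comm, ← vecMul_transpose, hg]
    rfl
  have corner : V ⬝ᵥ g *ᵥ V - ⅟2 * (V ⬝ᵥ g *ᵥ V) - ⅟2 * (V ⬝ᵥ g *ᵥ V) = 0 := by
    rw [sub_sub, ← add_mul, invOf_two_add_invOf_two, one_mul, sub_self]
  have mulVec_zero_fun : g *ᵥ (fun _ => 0) = 0 := mulVec_zero g
  ext (i | i | i) (j | j | j) <;> rw [transpose_mul_hyperbolicExtension_mul_apply] <;>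
    simp [-vecMul_vecMul, laguerreMatrix, hyperbolicExtension, gram, lastRow, lastRow_symm,
      mulVec_zero_fun, corner]

theorem exists_eq_laguerreMatrix [DecidableEq n] {g : Matrix n n α}
    {M : Matrix (Unit ⊕ n ⊕ Unit) (Unit ⊕ n ⊕ Unit) α}
    (hM : Mᵀ * hyperbolicExtension g * M = hyperbolicExtension g)
    (hlast : M *ᵥ Pi.single (.inr (.inr ())) 1 = Pi.single (.inr (.inr ())) 1) :
    ∃ B V, Bᵀ * g * B = g ∧ M = laguerreMatrix g B V := by
  have gram (i j) :=
    (transpose_mul_hyperbolicExtension_mul_apply g M i j).symm.trans (congrFun₂ hM i j)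
  have lastCol (i) : M i (.inr (.inr ())) =
      (Pi.single (.inr (.inr ())) 1 : Unit ⊕ n ⊕ Unit → α) i := by
    simpa using congrFun hlast i
  have firstRow (j) : M (.inl ()) j = (Pi.single (.inl ()) 1 : Unit ⊕ n ⊕ Unit → α) j := by
    have := gram (.inr (.inr ())) j
    rcases j with j | j | j
    · simpa [lastCol, hyperbolicExtension, ← Pi.zero_def] using this
    · simpa [lastCol, hyperbolicExtension, ← Pi.zero_def] using this
    · simp [lastCol]
  let B : Matrix n n α := of fun i j => M (.inr (.inl i)) (.inr (.inl j))
  let V : n → α := fun i => M (.inr (.inl i)) (.inl ())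
  have hB : Bᵀ * g * B = g := by
    ext i j
    have : Bᵀ i ⬝ᵥ g *ᵥ Bᵀ j - _ - _ = _ := gram (.inr (.inl i)) (.inr (.inl j))
    simpa [mul_mul_apply, firstRow, hyperbolicExtension] using this
  have lastRow (j : n) : M (.inr (.inr ())) (.inr (.inl j)) = (V ᵥ* g ᵥ* B) j := by
    have : V ⬝ᵥ g *ᵥ Bᵀ j - _ - _ = _ := gram (.inl ()) (.inr (.inl j))
    have : V ⬝ᵥ g *ᵥ Bᵀ j = M (.inr (.inr ())) (.inr (.inl j)) := by
      simpa [firstRow, hyperbolicExtension, sub_eq_zero] using this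
    rw [← this, dotProduct_mulVec]
    rfl
  have corner : M (.inr (.inr ())) (.inl ()) = ⅟2 * (V ⬝ᵥ g *ᵥ V) := by
    have : V ⬝ᵥ g *ᵥ V - _ - _ = _ := gram (.inl ()) (.inl ())
    have : V ⬝ᵥ g *ᵥ V = 2 * M (.inr (.inr ())) (.inl ()) := by
      simpa [firstRow, hyperbolicExtension, sub_sub, sub_eq_zero, ← two_mul] using this
    rw [this, invOf_mul_cancel_left]
  refine ⟨B, V, hB, ?_⟩
  ext (i | i | i) (j | j | j) <;>
    simp [-vecMul_vecMul, laguerreMatrix, firstRow, lastCol, lastRow, corner, B, V]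

end HyperbolicExtension

section Lorentz

/-- The splitting of the indices of `ℝ⁴` into the time index `0` and the space indices
`1, 2, 3`. -/
noncomputable def timeSpaceEquiv : Unit ⊕ Fin 3 ≃ Fin 4 :=
  .ofBijective (Sum.elim (fun _ => 0) Fin.succ) (by decide)

theorem etaL_submatrix :
    etaL.submatrix timeSpaceEquiv timeSpaceEquiv = fromBlocks (-1) 0 0 1 := by
  ext (i | i) (j | j)
  · simp [etaL, timeSpaceEquiv]
  · fin_cases j <;> simp [etaL, timeSpaceEquiv]
  · fin_cases i <;> simp [etaL, timeSpaceEquiv]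
  · fin_cases i <;> fin_cases j <;> simp [etaL, timeSpaceEquiv]

theorem single_zero_comp_timeSpaceEquiv :
    (Pi.single 0 1 : Fin 4 → ℝ) ∘ timeSpaceEquiv = Pi.single (.inl ()) 1 := by
  ext (i | i) <;> simp [timeSpaceEquiv]

theorem hatM_submatrix (R : Matrix (Fin 3) (Fin 3) ℝ) :
    (hatM R).submatrix timeSpaceEquiv timeSpaceEquiv = fromBlocks 1 0 0 R := by
  ext (i | i) (j | j) <;> simp [hatM, timeSpaceEquiv]

theorem det_hatM (R : Matrix (Fin 3) (Fin 3) ℝ) : (hatM R).det = R.det := by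
  rw [← det_submatrix_equiv_self timeSpaceEquiv, hatM_submatrix, det_fromBlocks_zero₁₂, det_one,
    one_mul]

theorem etaL_isometry_fixing_time_iff (B : Matrix (Fin 4) (Fin 4) ℝ) :
    (Bᵀ * etaL * B = etaL ∧ B *ᵥ Pi.single 0 1 = Pi.single 0 1) ↔
      ∃ R, Rᵀ * R = 1 ∧ B = hatM R := by
  rw [← submatrix_isometry_iff timeSpaceEquiv, ← submatrix_mulVec_eq_self_iff timeSpaceEquiv,
    etaL_submatrix, single_zero_comp_timeSpaceEquiv]
  have fixing_iff := isometry_fixing_left_iff (isUnit_one.neg : IsUnit (-1 : Matrix Unit Unit ℝ))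
    (1 : Matrix (Fin 3) (Fin 3) ℝ) (B.submatrix timeSpaceEquiv timeSpaceEquiv)
  simpa only [Unique.forall_iff, Matrix.mul_one, ← hatM_submatrix, submatrix_equiv_inj_iff]
    using fixing_iff

theorem exists_eq_hatV_iff (V : Fin 4 → ℝ) : (∃ v, V = hatV v) ↔ V 0 = 0 := by
  constructor
  · rintro ⟨v, rfl⟩
    rfl
  · intro hV
    refine ⟨Fin.tail V, funext fun i => ?_⟩
    fin_cases i
    · exact hV
    all_goals rfl

end Lorentz

section NullCoordinates

/-- The Gram matrix of the Lorentz product in the null coordinates `Ṽ = KV` of `ℝ⁴`. -/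
def nullEtaL : Matrix (Fin 4) (Fin 4) ℝ :=
  !![0, 0, 0, -1;
     0, 1, 0, 0;
     0, 0, 1, 0;
     -1, 0, 0, 0]

theorem nullEtaL_isSymm : nullEtaL.IsSymm := by
  ext i j
  fin_cases i <;> fin_cases j <;> rfl

theorem KmatInv_mul_Kmat : KmatInv * Kmat = 1 := by
  ext i j
  fin_cases i <;> fin_cases j <;>
    norm_num [KmatInv, Kmat, mul_apply, Fin.sum_univ_succ, ← mul_inv]

theorem Kmat_mul_KmatInv : Kmat * KmatInv = 1 :=
  mul_eq_one_comm.mp KmatInv_mul_Kmat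

theorem transpose_Kmat_mul_nullEtaL_mul_Kmat : Kmatᵀ * nullEtaL * Kmat = etaL := by
  ext i j
  fin_cases i <;> fin_cases j <;>
    norm_num [nullEtaL, etaL, Kmat, mul_apply, Fin.sum_univ_succ, ← mul_inv]

theorem mprod_eq_nullEtaL (V W : Fin 4 → ℝ) :
    mprod V W = (Kmat *ᵥ V) ⬝ᵥ nullEtaL *ᵥ (Kmat *ᵥ W) :=
  calc
    mprod V W = V ⬝ᵥ etaL *ᵥ W := by simp [mprod, etaL, dotProduct, Fin.sum_univ_four]
    _ = (Kmat *ᵥ V) ⬝ᵥ nullEtaL *ᵥ (Kmat *ᵥ W) := by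
      rw [← transpose_Kmat_mul_nullEtaL_mul_Kmat, ← mulVec_mulVec, ← mulVec_mulVec,
        dotProduct_mulVec, vecMul_transpose]

theorem starV_eq_vecMul (V : Fin 4 → ℝ) : starV V = V ᵥ* nullEtaL := by
  ext i
  fin_cases i <;> simp [starV, nullEtaL, vecMul, dotProduct, Fin.sum_univ_four]

end NullCoordinates

section LaguerreGroup

/-- The splitting of the indices of `ℝ⁶` into `0`, the indices `1, …, 4` of the Lorentz space
`ℝ⁴`, and `5`. -/
noncomputable def nullIndexEquiv : Unit ⊕ Fin 4 ⊕ Unit ≃ Fin 6 :=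
  .ofBijective (Sum.elim (fun _ => 0) (Sum.elim (fun i => i.castSucc.succ) fun _ => 5)) (by decide)

theorem etaM_submatrix :
    etaM.submatrix nullIndexEquiv nullIndexEquiv = hyperbolicExtension nullEtaL := by
  ext (i | i | i) (j | j | j)
  case inr.inl.inr.inl =>
    fin_cases i <;> fin_cases j <;> simp [etaM, nullIndexEquiv, hyperbolicExtension, nullEtaL]
  case inr.inl.inl | inr.inl.inr.inr =>
    fin_cases i <;> simp [etaM, nullIndexEquiv, hyperbolicExtension]
  case inl.inr.inl | inr.inr.inr.inl =>
    fin_cases j <;> simp [etaM, nullIndexEquiv, hyperbolicExtension]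
  all_goals simp [etaM, nullIndexEquiv, hyperbolicExtension]

theorem AofBV_submatrix (B : Matrix (Fin 4) (Fin 4) ℝ) (V : Fin 4 → ℝ) :
    (AofBV B V).submatrix nullIndexEquiv nullIndexEquiv =
      laguerreMatrix nullEtaL (Kmat * B * KmatInv) (Kmat *ᵥ V) := by
  ext (i | i | i) (j | j | j) <;>
    simp [-mulVec_mulVec, AofBV, nullIndexEquiv, laguerreMatrix, starV_eq_vecMul,
      mprod_eq_nullEtaL, div_eq_inv_mul]

theorem eps5_comp_nullIndexEquiv : eps5 ∘ nullIndexEquiv = Pi.single (.inr (.inr ())) 1 := by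
  ext (i | i | i)
  case inr.inl => fin_cases i <;> simp [eps5, nullIndexEquiv]
  all_goals simp [eps5, nullIndexEquiv]

theorem eps14_comp_nullIndexEquiv :
    eps14 ∘ nullIndexEquiv = √2 • middleVec (Kmat *ᵥ Pi.single 0 1) := by
  ext (i | i | i)
  case inr.inl => fin_cases i <;> simp [eps14, nullIndexEquiv, middleVec, Kmat]
  all_goals simp [eps14, nullIndexEquiv, middleVec]

theorem det_AofBV (B : Matrix (Fin 4) (Fin 4) ℝ) (V : Fin 4 → ℝ) : (AofBV B V).det = B.det := by
  rw [← det_submatrix_equiv_self nullIndexEquiv, AofBV_submatrix, det_laguerreMatrix,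
    det_mul_right_comm, Kmat_mul_KmatInv, Matrix.one_mul]

theorem AofBV_mulVec_eps14_eq_self_iff (B : Matrix (Fin 4) (Fin 4) ℝ) (V : Fin 4 → ℝ) :
    AofBV B V *ᵥ eps14 = eps14 ↔ B *ᵥ Pi.single 0 1 = Pi.single 0 1 ∧ V 0 = 0 := by
  have hsqrt : √(2 : ℝ) ≠ 0 := by positivity
  rw [← submatrix_mulVec_eq_self_iff nullIndexEquiv, eps14_comp_nullIndexEquiv, AofBV_submatrix,
    mulVec_smul, (smul_right_injective _ hsqrt).eq_iff,
    laguerreMatrix_mulVec_middleVec_eq_self_iff, conj_mulVec_eq_self_iff KmatInv_mul_Kmat,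
    ← mprod_eq_nullEtaL]
  simp [mprod]

theorem exists_eq_Kmat_conj (B : Matrix (Fin 4) (Fin 4) ℝ) : ∃ C, B = Kmat * C * KmatInv :=
  ⟨KmatInv * B * Kmat, by
    calc
      B = (Kmat * KmatInv) * B * (Kmat * KmatInv) := by simp [Kmat_mul_KmatInv]
      _ = Kmat * (KmatInv * B * Kmat) * KmatInv := by simp only [Matrix.mul_assoc]⟩

theorem exists_eq_Kmat_mulVec (V : Fin 4 → ℝ) : ∃ W, V = Kmat *ᵥ W :=
  ⟨KmatInv *ᵥ V, by rw [mulVec_mulVec, Kmat_mul_KmatInv, one_mulVec]⟩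

theorem etaM_isometry_fixing_eps5_iff (A : Matrix (Fin 6) (Fin 6) ℝ) :
    (Aᵀ * etaM * A = etaM ∧ A *ᵥ eps5 = eps5) ↔
      ∃ B V, Bᵀ * etaL * B = etaL ∧ A = AofBV B V := by
  have conj_iff := conj_isometry_iff KmatInv_mul_Kmat transpose_Kmat_mul_nullEtaL_mul_Kmat
  rw [← submatrix_isometry_iff nullIndexEquiv, ← submatrix_mulVec_eq_self_iff nullIndexEquiv,
    etaM_submatrix, eps5_comp_nullIndexEquiv]
  simp only [← submatrix_equiv_inj_iff nullIndexEquiv (M := A), AofBV_submatrix, ← conj_iff]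
  constructor
  · rintro ⟨hA, hlast⟩
    obtain ⟨Bt, Vt, hB, hBV⟩ := exists_eq_laguerreMatrix hA hlast
    obtain ⟨B, rfl⟩ := exists_eq_Kmat_conj Bt
    obtain ⟨V, rfl⟩ := exists_eq_Kmat_mulVec Vt
    exact ⟨B, V, hB, hBV⟩
  · rintro ⟨B, V, hB, hBV⟩
    rw [hBV]
    exact ⟨laguerreMatrix_isometry nullEtaL_isSymm hB _, laguerreMatrix_mulVec_single_last _ _ _⟩

end LaguerreGroup

/-- `A ∈ M₆(ℝ)` satisfies `Aᵀ η A = η`, `det A = 1`, `A ε₅ = ε₅` and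
`A(ε₁+ε₄) = ε₁+ε₄` iff `A = A(R̂; v̂)` for some `R ∈ SO(3)` and `v ∈ ℝ³`: the image
of the embedding of the Euclidean group `SO(3) ⋉ ℝ³` into the Laguerre group `L`
is exactly the subgroup of `L` of elements fixing `ε₁+ε₄`. -/
theorem stmt15 (A : Matrix (Fin 6) (Fin 6) ℝ) :
    (Aᵀ * etaM * A = etaM ∧ A.det = 1 ∧ A.mulVec eps5 = eps5 ∧
      A.mulVec eps14 = eps14) ↔
    (∃ (R : Matrix (Fin 3) (Fin 3) ℝ) (v : Fin 3 → ℝ),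
      Rᵀ * R = 1 ∧ R.det = 1 ∧ A = AofBV (hatM R) (hatV v)) := by
  constructor
  · rintro ⟨hA, hdet, h5, h14⟩
    obtain ⟨B, V, hB, rfl⟩ := (etaM_isometry_fixing_eps5_iff A).1 ⟨hA, h5⟩
    obtain ⟨hB0, hV0⟩ := (AofBV_mulVec_eps14_eq_self_iff B V).1 h14
    obtain ⟨R, hR, rfl⟩ := (etaL_isometry_fixing_time_iff B).1 ⟨hB, hB0⟩
    obtain ⟨v, rfl⟩ := (exists_eq_hatV_iff V).2 hV0
    exact ⟨R, v, hR, by rwa [det_AofBV, det_hatM] at hdet, rfl⟩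
  · rintro ⟨R, v, hR, hdet, rfl⟩
    obtain ⟨hB, hB0⟩ := (etaL_isometry_fixing_time_iff (hatM R)).2 ⟨R, hR, rfl⟩
    have hV0 : hatV v 0 = 0 := (exists_eq_hatV_iff _).1 ⟨v, rfl⟩
    obtain ⟨hA, h5⟩ := (etaM_isometry_fixing_eps5_iff _).2 ⟨hatM R, hatV v, hB, rfl⟩
    have h14 := (AofBV_mulVec_eps14_eq_self_iff _ _).2 ⟨hB0, hV0⟩
    exact ⟨hA, by rw [det_AofBV, det_hatM, hdet], h5, h14⟩
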